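/- arXiv:2003.14302 — 4 statements merged into one kernel-verified Lean document; each statement's English description precedes it below -/
import Mathlib

section
/- Let V be a real vector space, K ⊆ V a convex set, C ⊆ K a convex subset, and E ⊆ K an extreme subset of K. If the relative algebraic interior ri(C) intersects E, i.e. ri(C) ∩ E ≠ ∅, then C ⊆ E. -/
variable {V : Type*} [AddCommGroup V] [Module ℝ V]

/-- `E` is an extreme subset of `K`: whenever a point of `E` is written as
`(1-l)•y + l•z` with `y, z ∈ K` and `l ∈ (0,1)`, both `y` and `z` lie in `E`. -/
def IsExtremeSubset (K E : Set V) : Prop :=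
  E ⊆ K ∧ ∀ x ∈ E, ∀ y ∈ K, ∀ z ∈ K, ∀ l : ℝ, l ∈ Set.Ioo (0:ℝ) 1 →
    x = (1 - l) • y + l • z → y ∈ E ∧ z ∈ E

/-- `F` is a face of `K`: a convex extreme subset of `K`. -/
def IsFaceOf (K F : Set V) : Prop := Convex ℝ F ∧ IsExtremeSubset K F

/-- The face of `K` generated by `x`: the smallest face of `K` containing `x`
(the intersection of all faces of `K` containing `x`). -/
def genFace (K : Set V) (x : V) : Set V := ⋂₀ {F | IsFaceOf K F ∧ x ∈ F}

/-- The relative algebraic interior of `C`: all `x ∈ C` such that for every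
`y` in the affine hull of `C` there is `ε > 0` with `x ± ε(y - x) ∈ C`. -/
def riSet (C : Set V) : Set V :=
  {x | x ∈ C ∧ ∀ y ∈ affineSpan ℝ C, ∃ ε : ℝ, 0 < ε ∧
    x + ε • (y - x) ∈ C ∧ x - ε • (y - x) ∈ C}

/-! From any `y ∈ C`, the segment from `y` to a point `x` of the relative algebraic interior of `C`
can be continued beyond `x` to some `z ∈ C`. If moreover `x ∈ E`, then extremality of `E`, applied
to `x` on the open segment from `y` to `z`, forces `y ∈ E`. -/

theorem mem_openSegment_sub_smul_sub {𝕜 W : Type*} [Field 𝕜] [LinearOrder 𝕜]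
    [IsStrictOrderedRing 𝕜] [AddCommGroup W] [Module 𝕜 W] (x y : W) {ε : 𝕜} (hε : 0 < ε) :
    x ∈ openSegment 𝕜 y (x - ε • (y - x)) := by
  refine mem_openSegment_iff_div.2 ⟨ε, 1, hε, one_pos, ?_⟩
  match_scalars <;> field_simp <;> ring

theorem exists_mem_openSegment_of_mem_riSet {C : Set V} {x y : V} (hx : x ∈ riSet C)
    (hy : y ∈ C) : ∃ z ∈ C, x ∈ openSegment ℝ y z := by
  obtain ⟨ε, hε, -, hz⟩ := hx.2 y (subset_affineSpan ℝ C hy)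
  exact ⟨_, hz, mem_openSegment_sub_smul_sub x y hε⟩

theorem isExtremeSubset_iff_isExtreme {K E : Set V} :
    IsExtremeSubset K E ↔ IsExtreme ℝ K E := by
  constructor
  · refine fun hE ↦ ⟨hE.1, fun y hy z hz x hx hxyz ↦ ?_⟩
    rw [openSegment_eq_image] at hxyz
    obtain ⟨l, hl, hlx⟩ := hxyz
    exact (hE.2 x hx y hy z hz l hl hlx.symm).1
  · refine fun hE ↦ ⟨hE.subset, fun x hx y hy z hz l hl hlx ↦ ?_⟩
    have hxyz : x ∈ openSegment ℝ y z := by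
      rw [openSegment_eq_image]
      exact ⟨l, hl, hlx.symm⟩
    exact ⟨hE.left_mem_of_mem_openSegment hy hz hx hxyz,
      hE.right_mem_of_mem_openSegment hy hz hx hxyz⟩

theorem stmt0_general {K C E : Set V} (hC : C ⊆ K) (hE : IsExtremeSubset K E)
    (hne : (riSet C ∩ E).Nonempty) : C ⊆ E := by
  obtain ⟨x, hxC, hxE⟩ := hne
  intro y hy
  obtain ⟨z, hz, hxyz⟩ := exists_mem_openSegment_of_mem_riSet hxC hy
  have hE' : IsExtreme ℝ K E := isExtremeSubset_iff_isExtreme.1 hE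
  exact hE'.left_mem_of_mem_openSegment (hC hy) (hC hz) hxE hxyz

theorem stmt0 (K C E : Set V) (hK : Convex ℝ K) (hC : C ⊆ K) (hCconv : Convex ℝ C)
    (hE : IsExtremeSubset K E) (hne : (riSet C ∩ E).Nonempty) :
    C ⊆ E :=
  stmt0_general hC hE hne
end

section
/- Let V be a real vector space, K ⊆ V a convex set, and x ∈ K. Then F_K(x) = ⋃ [y, z], where the union is over all pairs y, z ∈ K such that x lies in the open segment (y, z) (with the convention [x, x] = (x, x) = {x}, so x itself is included). -/
/-!
Let `U` be the set of points of `K` whose segment to `x` can be prolonged beyond `x` inside `K`.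
Every extreme subset of `K` containing `x` contains `U`, and `U` is itself a face: both its
convexity and its extremality reduce to finding, by rescaling the weights of given convex
combinations, a new prolongation whose far endpoint lies between points of `K`. Hence `U` is the
face generated by `x`. As `U` is convex and contains both endpoints of each segment of `K` with `x`
in its interior, it is also the union of these segments.
-/

variable {V : Type*} [AddCommGroup V] [Module ℝ V]

section Segments

variable {𝕜 E : Type*} [Semifield 𝕜] [LinearOrder 𝕜] [IsStrictOrderedRing 𝕜]
  [AddCommMonoid E] [Module 𝕜 E] {a b : 𝕜} {x y z : E}

theorem mem_openSegment_of_add_smul_eq (ha : 0 < a) (hb : 0 < b)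
    (h : (a + b) • x = a • y + b • z) : x ∈ openSegment 𝕜 y z := by
  have hab : a + b ≠ 0 := (add_pos ha hb).ne'
  refine ⟨a / (a + b), b / (a + b), by positivity, by positivity, ?_, ?_⟩
  · rw [← add_div, div_self hab]
  · calc (a / (a + b)) • y + (b / (a + b)) • z
        = (a + b)⁻¹ • (a • y + b • z) := by simp only [div_eq_inv_mul, mul_smul, smul_add]
      _ = x := by rw [← h, inv_smul_smul₀ hab]

theorem exists_mem_openSegment_add_smul_eq (ha : 0 < a) (hb : 0 < b) (y z : E) :
    ∃ x ∈ openSegment 𝕜 y z, (a + b) • x = a • y + b • z := by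
  have h : (a + b) • (a + b)⁻¹ • (a • y + b • z) = a • y + b • z :=
    smul_inv_smul₀ (add_pos ha hb).ne' (a • y + b • z)
  exact ⟨_, mem_openSegment_of_add_smul_eq ha hb h, h⟩

theorem exists_mem_openSegment_of_left_mem_openSegment {w p : E} (hx : x ∈ openSegment 𝕜 w p)
    (hw : w ∈ openSegment 𝕜 y z) : ∃ q ∈ openSegment 𝕜 z p, x ∈ openSegment 𝕜 y q := by
  obtain ⟨a, b, ha, hb, hab, rfl⟩ := hx
  obtain ⟨c, d, hc, hd, hcd, rfl⟩ := hw
  obtain ⟨q, hq, hq_eq⟩ := exists_mem_openSegment_add_smul_eq (mul_pos ha hd) hb z p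
  refine ⟨q, hq, a * c, a * d + b, by positivity, by positivity, ?_, ?_⟩
  · rw [← add_assoc, ← mul_add, hcd, mul_one, hab]
  · rw [hq_eq]
    module

theorem exists_opposite_mem_openSegment {w w₁ w₂ v₁ v₂ : E}
    (h₁ : x ∈ openSegment 𝕜 w₁ v₁) (h₂ : x ∈ openSegment 𝕜 w₂ v₂)
    (hw : w ∈ openSegment 𝕜 w₁ w₂) : ∃ v ∈ openSegment 𝕜 v₁ v₂, x ∈ openSegment 𝕜 w v := by
  obtain ⟨a₁, b₁, ha₁, hb₁, hab₁, hx₁⟩ := h₁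
  obtain ⟨a₂, b₂, ha₂, hb₂, hab₂, hx₂⟩ := h₂
  obtain ⟨s, t, hs, ht, hst, rfl⟩ := hw
  -- In `(s * a₂) • x + (t * a₁) • x`, the `wᵢ`-terms add up to `(a₁ * a₂) • w`.
  obtain ⟨v, hv, hv_eq⟩ := exists_mem_openSegment_add_smul_eq
    (by positivity : 0 < s * a₂ * b₁) (by positivity : 0 < t * a₁ * b₂) v₁ v₂
  refine ⟨v, hv, mem_openSegment_of_add_smul_eq (a := a₁ * a₂)
    (b := s * a₂ * b₁ + t * a₁ * b₂) (by positivity) (by positivity) ?_⟩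
  have h_weights : a₁ * a₂ + (s * a₂ * b₁ + t * a₁ * b₂) = s * a₂ + t * a₁ := by
    calc a₁ * a₂ + (s * a₂ * b₁ + t * a₁ * b₂)
        = (s + t) * (a₁ * a₂) + (s * a₂ * b₁ + t * a₁ * b₂) := by rw [hst, one_mul]
      _ = s * a₂ * (a₁ + b₁) + t * a₁ * (a₂ + b₂) := by ring
      _ = s * a₂ + t * a₁ := by rw [hab₁, hab₂, mul_one, mul_one]
  calc (a₁ * a₂ + (s * a₂ * b₁ + t * a₁ * b₂)) • x
      = (s * a₂) • x + (t * a₁) • x := by rw [h_weights, add_smul]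
    _ = (s * a₂) • (a₁ • w₁ + b₁ • v₁) + (t * a₁) • (a₂ • w₂ + b₂ • v₂) := by rw [hx₁, hx₂]
    _ = (a₁ * a₂) • (s • w₁ + t • w₂) + ((s * a₂ * b₁) • v₁ + (t * a₁ * b₂) • v₂) := by module
    _ = (a₁ * a₂) • (s • w₁ + t • w₂) + (s * a₂ * b₁ + t * a₁ * b₂) • v := by rw [hv_eq]

end Segments

/-- The points `w` of `K` whose segment to `x` can be prolonged beyond `x` within `K`. For convex
`K` and `x ∈ K` this is the face generated by `x`. The point `x` itself is included, since
`openSegment 𝕜 x x = {x}`. -/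
def prolongablePoints (𝕜 : Type*) {E : Type*} [Semiring 𝕜] [PartialOrder 𝕜] [AddCommMonoid E]
    [SMul 𝕜 E] (K : Set E) (x : E) : Set E :=
  {w ∈ K | ∃ v ∈ K, x ∈ openSegment 𝕜 w v}

theorem prolongablePoints_subset_of_isExtreme {𝕜 E : Type*} [Semiring 𝕜] [PartialOrder 𝕜]
    [AddCommMonoid E] [SMul 𝕜 E] {K F : Set E} {x : E} (hF : IsExtreme 𝕜 K F) (hx : x ∈ F) :
    prolongablePoints 𝕜 K x ⊆ F :=
  fun _ ⟨hw, _, hv, hxwv⟩ => hF.left_mem_of_mem_openSegment hw hv hx hxwv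

section ProlongablePoints

variable {𝕜 E : Type*} [Semifield 𝕜] [LinearOrder 𝕜] [IsStrictOrderedRing 𝕜]
  [AddCommMonoid E] [Module 𝕜 E] {K : Set E} {x : E}

theorem self_mem_prolongablePoints (hx : x ∈ K) : x ∈ prolongablePoints 𝕜 K x :=
  ⟨hx, x, hx, mem_openSegment_of_add_smul_eq one_pos one_pos (add_smul 1 1 x)⟩

theorem convex_prolongablePoints (hK : Convex 𝕜 K) : Convex 𝕜 (prolongablePoints 𝕜 K x) := by
  rw [convex_iff_openSegment_subset]
  rintro w₁ ⟨hw₁, v₁, hv₁, hx₁⟩ w₂ ⟨hw₂, v₂, hv₂, hx₂⟩ w hw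
  obtain ⟨v, hv, hx⟩ := exists_opposite_mem_openSegment hx₁ hx₂ hw
  exact ⟨hK.openSegment_subset hw₁ hw₂ hw, v, hK.openSegment_subset hv₁ hv₂ hv, hx⟩

theorem isExtreme_prolongablePoints (hK : Convex 𝕜 K) :
    IsExtreme 𝕜 K (prolongablePoints 𝕜 K x) where
  subset := Set.sep_subset _ _
  left_mem_of_mem_openSegment := by
    rintro y hy z hz w ⟨-, v, hv, hx⟩ hw
    obtain ⟨q, hq, hxq⟩ := exists_mem_openSegment_of_left_mem_openSegment hx hw
    exact ⟨hy, q, hK.openSegment_subset hz hv hq, hxq⟩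

theorem isLeast_prolongablePoints (hK : Convex 𝕜 K) (hx : x ∈ K) :
    IsLeast {F | (Convex 𝕜 F ∧ IsExtreme 𝕜 K F) ∧ x ∈ F} (prolongablePoints 𝕜 K x) :=
  ⟨⟨⟨convex_prolongablePoints hK, isExtreme_prolongablePoints hK⟩, self_mem_prolongablePoints hx⟩,
    fun _ ⟨⟨_, hF⟩, hxF⟩ => prolongablePoints_subset_of_isExtreme hF hxF⟩

theorem prolongablePoints_eq_union_segments (hK : Convex 𝕜 K) :
    prolongablePoints 𝕜 K x =
      {w | ∃ y ∈ K, ∃ z ∈ K, x ∈ openSegment 𝕜 y z ∧ w ∈ segment 𝕜 y z} := by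
  apply Set.Subset.antisymm
  · rintro w ⟨hw, v, hv, hx⟩
    exact ⟨w, hw, v, hv, hx, left_mem_segment 𝕜 w v⟩
  · rintro w ⟨y, hy, z, hz, hx, hw⟩
    have hy_mem : y ∈ prolongablePoints 𝕜 K x := ⟨hy, z, hz, hx⟩
    have hz_mem : z ∈ prolongablePoints 𝕜 K x := ⟨hz, y, hy, openSegment_symm 𝕜 y z ▸ hx⟩
    exact (convex_prolongablePoints hK).segment_subset hy_mem hz_mem hw

theorem stmt4_general (hK : Convex 𝕜 K) (hx : x ∈ K) :
    ⋂₀ {F | (Convex 𝕜 F ∧ IsExtreme 𝕜 K F) ∧ x ∈ F} =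
      {w | ∃ y ∈ K, ∃ z ∈ K, x ∈ openSegment 𝕜 y z ∧ w ∈ segment 𝕜 y z} :=
  (isLeast_prolongablePoints hK hx).csInf_eq.trans (prolongablePoints_eq_union_segments hK)

end ProlongablePoints

theorem stmt4 (K : Set V) (hK : Convex ℝ K) (x : V) (hx : x ∈ K) :
    genFace K x =
      {w : V | ∃ y ∈ K, ∃ z ∈ K, x ∈ openSegment ℝ y z ∧ w ∈ segment ℝ y z} := by
  simpa only [genFace, IsFaceOf, isExtremeSubset_iff_isExtreme] using stmt4_general hK hx
end

section
/- Let V be a real vector space and K ⊆ V a convex set. The family of relative algebraic interiors of faces of K is a partition of K: every point of K lies in the relative algebraic interior of some face of K, and if two faces F, G of K satisfy ri(F) ∩ ri(G) ≠ ∅, then F = G (in particular the nonempty sets among the ri(F) are pairwise disjoint and cover K). -/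
variable {V : Type*} [AddCommGroup V] [Module ℝ V]

/-!
The directions `d` in which a convex set `K` can be left from `x ∈ K` without exiting `K` at once
form a pointed cone. Its lineality space `L` consists of the directions in which `K` extends on both
sides of `x`, and since `L` is a face of that cone, `K ∩ (x + L)` is a face of `K`; it has `x` in
its relative interior because its affine hull lies in `x + L`. If `x` is relatively interior to any
face `F`, every segment from a point of `F` to `x` extends beyond `x` inside `F`, so each face
containing `x` contains `F`: thus `F` is the face generated by `x`.
-/

section FeasibleCone

variable {𝕜 E : Type*} [Field 𝕜] [LinearOrder 𝕜] [IsStrictOrderedRing 𝕜]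
  [AddCommGroup E] [Module 𝕜 E] {K : Set E} {x y d : E}

theorem mem_pointedConeHull_of_convex (hK : Convex 𝕜 K) (h₀ : 0 ∈ K) :
    d ∈ PointedCone.hull 𝕜 K ↔ ∃ ε : 𝕜, 0 < ε ∧ ε • d ∈ K := by
  constructor
  · intro hd
    have hle : PointedCone.hull 𝕜 K ≤
        (ConvexCone.hull 𝕜 K).toPointedCone (ConvexCone.subset_hull h₀) :=
      Submodule.span_le.2 ConvexCone.subset_hull
    obtain ⟨r, hr, y, hy, rfl⟩ := (ConvexCone.mem_hull_of_convex hK).1 (hle hd)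
    exact ⟨r⁻¹, inv_pos.2 hr, by simpa only [inv_smul_smul₀ hr.ne'] using hy⟩
  · rintro ⟨ε, hε, hd⟩
    exact (PointedCone.smul_mem_iff _ hε).1 (PointedCone.subset_hull hd)

variable (𝕜) in
/-- The cone of feasible directions of `K` at `x`: the pointed cone generated by the translate
`K - x`. As a hull it is defined for every `K` and `x`; for convex `K` and `x ∈ K` it consists of
the `d` with `x + ε • d ∈ K` for some `ε > 0`. -/
def feasibleCone (K : Set E) (x : E) : PointedCone 𝕜 E :=
  PointedCone.hull 𝕜 ((x + ·) ⁻¹' K)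

theorem sub_mem_feasibleCone (hy : y ∈ K) : y - x ∈ feasibleCone 𝕜 K x :=
  PointedCone.subset_hull (by simpa using hy)

theorem mem_feasibleCone (hK : Convex 𝕜 K) (hx : x ∈ K) :
    d ∈ feasibleCone 𝕜 K x ↔ ∃ ε : 𝕜, 0 < ε ∧ x + ε • d ∈ K :=
  mem_pointedConeHull_of_convex (hK.translate_preimage_right x) (by simpa using hx)

theorem add_smul_mem_of_convex_of_le (hK : Convex 𝕜 K) (hx : x ∈ K) {δ ε : 𝕜} (hδ : 0 ≤ δ)
    (hδε : δ ≤ ε) (h : x + ε • d ∈ K) : x + δ • d ∈ K := by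
  have hε : 0 ≤ ε := hδ.trans hδε
  have hcancel : δ / ε * ε = δ := div_mul_cancel_of_imp fun hε₀ => (hδε.trans_eq hε₀).antisymm hδ
  have hmem := hK.add_smul_mem hx h (t := δ / ε) ⟨by positivity, div_le_one_of_le₀ hδε hε⟩
  rwa [smul_smul, hcancel] at hmem

theorem mem_lineal_feasibleCone (hK : Convex 𝕜 K) (hx : x ∈ K) :
    d ∈ (feasibleCone 𝕜 K x).lineal ↔ ∃ ε : 𝕜, 0 < ε ∧ x + ε • d ∈ K ∧ x - ε • d ∈ K := by
  simp only [PointedCone.mem_lineal, mem_feasibleCone hK hx, smul_neg, ← sub_eq_add_neg]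
  constructor
  · rintro ⟨⟨ε, hε, hadd⟩, ε', hε', hsub⟩
    have hmin : 0 < min ε ε' := lt_min hε hε'
    refine ⟨min ε ε', hmin, add_smul_mem_of_convex_of_le hK hx hmin.le (min_le_left _ _) hadd, ?_⟩
    rw [sub_eq_add_neg, ← smul_neg] at hsub ⊢
    exact add_smul_mem_of_convex_of_le hK hx hmin.le (min_le_right _ _) hsub
  · rintro ⟨ε, hε, hadd, hsub⟩
    exact ⟨⟨ε, hε, hadd⟩, ε, hε, hsub⟩

end FeasibleCone

variable {K C F G : Set V} {x y : V}

theorem IsExtremeSubset.mem_of_sub_smul_sub_mem (hG : IsExtremeSubset K G) (hx : x ∈ G)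
    (hy : y ∈ K) {ε : ℝ} (hε : 0 < ε) (h : x - ε • (y - x) ∈ K) : y ∈ G := by
  have hlt : ε / (1 + ε) < 1 := (div_lt_one (by positivity)).2 (by linarith)
  -- `x` divides the segment from `x - ε • (y - x)` to `y` in the ratio `ε : 1`.
  refine (hG.2 x hx _ h y hy (ε / (1 + ε)) ⟨by positivity, hlt⟩ ?_).2
  match_scalars <;> field

theorem IsExtremeSubset.subset_of_mem_riSet (hG : IsExtremeSubset K G) (hCK : C ⊆ K)
    (hxC : x ∈ riSet C) (hxG : x ∈ G) : C ⊆ G := by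
  intro y hy
  obtain ⟨ε, hε, -, hsub⟩ := hxC.2 y (subset_affineSpan ℝ C hy)
  exact hG.mem_of_sub_smul_sub_mem hxG (hCK hy) hε (hCK hsub)

theorem isFaceOf_inter_mk'_lineal (hK : Convex ℝ K) (x : V) :
    IsFaceOf K (K ∩ AffineSubspace.mk' x (feasibleCone ℝ K x).lineal) := by
  refine ⟨hK.inter (AffineSubspace.convex _), Set.inter_subset_left, ?_⟩
  rintro _ ⟨-, hmem⟩ y hy z hz l ⟨hl₀, hl₁⟩ rfl
  have hcomb : (1 - l) • (y - x) + l • (z - x) ∈ (feasibleCone ℝ K x).lineal := by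
    convert AffineSubspace.mem_mk'.1 hmem using 1
    rw [vsub_eq_sub]
    module
  have hface := PointedCone.IsFaceOf.lineal (feasibleCone ℝ K x)
  have hy' : y - x ∈ feasibleCone ℝ K x := sub_mem_feasibleCone hy
  have hz' : z - x ∈ feasibleCone ℝ K x := sub_mem_feasibleCone hz
  have hl₁' : 0 < 1 - l := sub_pos.2 hl₁
  exact ⟨⟨hy, hface.mem_of_smul_add_smul_mem_left hy' hz' hl₁' hl₀ hcomb⟩,
    ⟨hz, hface.mem_of_smul_add_smul_mem_right hy' hz' hl₁' hl₀ hcomb⟩⟩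

theorem genFace_eq_inter_mk'_lineal (hK : Convex ℝ K) (hx : x ∈ K) :
    genFace K x = K ∩ AffineSubspace.mk' x (feasibleCone ℝ K x).lineal := by
  apply Set.Subset.antisymm
  · exact Set.sInter_subset_of_mem
      ⟨isFaceOf_inter_mk'_lineal hK x, hx, AffineSubspace.self_mem_mk' _ _⟩
  · rintro y ⟨hy, hdir⟩ F ⟨hF, hxF⟩
    obtain ⟨ε, hε, -, hsub⟩ := (mem_lineal_feasibleCone hK hx).1 hdir
    exact hF.2.mem_of_sub_smul_sub_mem hxF hy hε hsub

theorem isFaceOf_genFace (hK : Convex ℝ K) (hx : x ∈ K) : IsFaceOf K (genFace K x) :=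
  genFace_eq_inter_mk'_lineal hK hx ▸ isFaceOf_inter_mk'_lineal hK x

theorem mem_riSet_genFace (hK : Convex ℝ K) (hx : x ∈ K) : x ∈ riSet (genFace K x) := by
  rw [genFace_eq_inter_mk'_lineal hK hx]
  set L := (feasibleCone ℝ K x).lineal
  refine ⟨⟨hx, AffineSubspace.self_mem_mk' _ _⟩, fun y hy => ?_⟩
  have hdir : y - x ∈ L := AffineSubspace.mem_mk'.1 (affineSpan_le.2 Set.inter_subset_right hy)
  obtain ⟨ε, hε, hadd, hsub⟩ := (mem_lineal_feasibleCone hK hx).1 hdir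
  have hεdir : ε • (y - x) ∈ L := L.smul_mem ε hdir
  refine ⟨ε, hε, ⟨hadd, ?_⟩, hsub, ?_⟩
  · simpa [AffineSubspace.mem_mk'] using hεdir
  · simpa [AffineSubspace.mem_mk'] using hεdir

theorem IsFaceOf.eq_genFace_of_mem_riSet (hF : IsFaceOf K F) (hx : x ∈ riSet F) :
    F = genFace K x :=
  Set.Subset.antisymm
    (Set.subset_sInter fun _ ⟨hG, hxG⟩ => hG.2.subset_of_mem_riSet hF.2.1 hx hxG)
    (Set.sInter_subset_of_mem ⟨hF, hx.1⟩)

theorem stmt6 (K : Set V) (hK : Convex ℝ K) :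
    (∀ x ∈ K, ∃ F : Set V, IsFaceOf K F ∧ x ∈ riSet F) ∧
    (∀ F G : Set V, IsFaceOf K F → IsFaceOf K G →
      (riSet F ∩ riSet G).Nonempty → F = G) := by
  refine ⟨fun x hx => ⟨genFace K x, isFaceOf_genFace hK hx, mem_riSet_genFace hK hx⟩, ?_⟩
  rintro F G hF hG ⟨x, hxF, hxG⟩
  exact (hF.eq_genFace_of_mem_riSet hxF).trans (hG.eq_genFace_of_mem_riSet hxG).symm
end

section
/- Let V be a real vector space, K ⊆ V a convex set, ℓ ∈ ℕ, u = {1, …, ℓ}, and for each k ∈ u let f_k : K → ℝ ∪ {+∞} be a generalized affine map and α_k ∈ ℝ. Let s ⊆ u and let K_u^s = {x ∈ K : f_k(x) ≤ α_k for all k ∈ u \ s, and f_k(x) = α_k for all k ∈ s}, and let x ∈ K_u^s. If the face F_{K_u^s}(x) of K_u^s generated by x has finite dimension m ∈ ℕ, then the dimension of the face F_K(x) of K generated by x belongs to {m, m+1, …, m+ℓ}. -/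
variable {V : Type*} [AddCommGroup V] [Module ℝ V]

/-- A generalized affine map on `K` with values in `ℝ ∪ {+∞}` (modelled by
`EReal` values that are never `⊥` on `K`), affine with the extended arithmetic
`0·(+∞) = 0`, `λ·(+∞) = +∞` for `λ > 0`, `α + (+∞) = +∞`. -/
def IsGenAffine (K : Set V) (f : V → EReal) : Prop :=
  (∀ x ∈ K, f x ≠ ⊥) ∧
  ∀ x ∈ K, ∀ y ∈ K, ∀ l : ℝ, l ∈ Set.Icc (0:ℝ) 1 →
    f ((1 - l) • x + l • y) = ((1 - l : ℝ) : EReal) * f x + ((l : ℝ) : EReal) * f y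

/-!
The face of `K` generated by `x` consists of the points `y ∈ K` for which the segment from `y` to
`x` can be prolonged in `K` beyond `x`. Its direction space is therefore the space `D K x` of all
`v` such that `x + t • v ∈ K` for every real `t` close to `0`.

A generalized affine map that is finite at `x` is finite and affine near `x` along every such line:
if `x` lies between two points of `K`, an infinite value at one of them would force an infinite
value at `x`. Its line derivative at `x` is a linear form on `D K x`. A direction in the common
kernel of the `ℓ` forms so obtained leaves all constraints unchanged near `x`, hence lies in
`D (K_u^s) x`. This subspace of `D K x` thus has codimension at most `ℓ`.
-/

open Filter Topology

section LinearAlgebra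

variable {k M W : Type*} [DivisionRing k] [AddCommGroup M] [Module k M] [AddCommGroup W]
  [Module k W]

theorem exists_rank_eq_rank_add_of_ker_le [Module.Finite k W] (Φ : M →ₗ[k] W)
    {N : Submodule k M} (hN : LinearMap.ker Φ ≤ N) :
    ∃ j : ℕ, j ≤ Module.finrank k W ∧ Module.rank k M = Module.rank k N + j := by
  have : Module.Finite k (M ⧸ LinearMap.ker Φ) := .equiv Φ.quotKerEquivRange.symm
  have hsurj := Submodule.factor_surjective hN
  have : Module.Finite k (M ⧸ N) := .of_surjective _ hsurj
  refine ⟨Module.finrank k (M ⧸ N), ?_, ?_⟩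
  · calc Module.finrank k (M ⧸ N)
        ≤ Module.finrank k (M ⧸ LinearMap.ker Φ) := LinearMap.finrank_le_finrank_of_surjective hsurj
      _ = Module.finrank k (LinearMap.range Φ) := Φ.quotKerEquivRange.finrank_eq
      _ ≤ Module.finrank k W := Submodule.finrank_le _
  · rw [Module.finrank_eq_rank, add_comm, Submodule.rank_quotient_add_rank]

end LinearAlgebra

section LineDirections

theorem eventually_mul_const {p : ℝ → Prop} (hp : ∀ᶠ t in 𝓝 0, p t) (c : ℝ) :
    ∀ᶠ t in 𝓝 0, p (t * c) := by
  have hc : Tendsto (· * c) (𝓝 0) (𝓝 0) := Continuous.tendsto' (by fun_prop) _ _ (zero_mul c)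
  exact hc.eventually hp

variable {K : Set V} {x y z v : V}

/-- The space of directions `v` such that a neighbourhood of `x` in the line `x + ℝ v` lies in `K`.
It is the direction space of the face of `K` generated by `x`. -/
def lineDirections (hK : Convex ℝ K) (hx : x ∈ K) : Submodule ℝ V where
  carrier := {v | ∀ᶠ t in 𝓝 (0 : ℝ), x + t • v ∈ K}
  zero_mem' := by simp [hx]
  add_mem' {v w} hv hw := by
    filter_upwards [eventually_mul_const hv 2, eventually_mul_const hw 2] with t htv htw
    convert hK htv htw (a := 1 / 2) (b := 1 / 2) (by norm_num) (by norm_num) (by norm_num) using 1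
    module
  smul_mem' c v hv := by
    filter_upwards [eventually_mul_const hv c] with t ht
    rwa [smul_smul]

theorem mem_lineDirections {hK : Convex ℝ K} {hx : x ∈ K} :
    v ∈ lineDirections hK hx ↔ ∀ᶠ t in 𝓝 (0 : ℝ), x + t • v ∈ K :=
  Iff.rfl

theorem lineDirections_mono {L : Set V} (hL : Convex ℝ L) (hK : Convex ℝ K) (hx : x ∈ L)
    (hLK : L ⊆ K) : lineDirections hL hx ≤ lineDirections hK (hLK hx) :=
  fun _ hv ↦ Eventually.mono hv fun _ ht ↦ hLK ht

theorem exists_pos_add_smul_mem_sub_smul_mem {hK : Convex ℝ K} {hx : x ∈ K}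
    (hv : v ∈ lineDirections hK hx) : ∃ ε : ℝ, 0 < ε ∧ x + ε • v ∈ K ∧ x - ε • v ∈ K := by
  have hneg : ∀ᶠ t in 𝓝 (0 : ℝ), x - t • v ∈ K := by
    simpa only [mem_lineDirections, smul_neg, ← sub_eq_add_neg] using neg_mem hv
  obtain ⟨ε, hε, hpos⟩ :=
    ((hv.and hneg).filter_mono nhdsWithin_le_nhds |>.and self_mem_nhdsWithin).exists (f := 𝓝[>] 0)
  exact ⟨ε, hpos, hε⟩

theorem mem_lineDirections_of_pos (hK : Convex ℝ K) (hx : x ∈ K) {a b : ℝ} (ha : 0 < a)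
    (hb : 0 < b) (hxa : x + a • v ∈ K) (hxb : x - b • v ∈ K) : v ∈ lineDirections hK hx := by
  have hline : Convex ℝ ((fun t : ℝ ↦ x + t • v) ⁻¹' K) :=
    (hK.translate_preimage_right x).linear_preimage (LinearMap.toSpanSingleton ℝ V v)
  refine mem_of_superset (Icc_mem_nhds (neg_neg_of_pos hb) ha) (hline.ordConnected.out ?_ hxa)
  simpa [sub_eq_add_neg] using hxb

theorem sub_mem_lineDirections_iff (hK : Convex ℝ K) (hx : x ∈ K) (hy : y ∈ K) :
    y - x ∈ lineDirections hK hx ↔ ∃ δ : ℝ, 0 < δ ∧ x - δ • (y - x) ∈ K := by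
  constructor
  · intro h
    obtain ⟨δ, hδ, -, hmem⟩ := exists_pos_add_smul_mem_sub_smul_mem h
    exact ⟨δ, hδ, hmem⟩
  · rintro ⟨δ, hδ, hmem⟩
    exact mem_lineDirections_of_pos hK hx one_pos hδ (by simpa using hy) hmem

theorem sub_mem_lineDirections_of_mem_openSegment (hK : Convex ℝ K) (hx : x ∈ K) (hy : y ∈ K)
    (hz : z ∈ K) {p : V} (hp : p ∈ openSegment ℝ y z) (hpx : p - x ∈ lineDirections hK hx) :
    y - x ∈ lineDirections hK hx := by
  obtain ⟨a, b, ha, hb, hab, rfl⟩ := hp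
  have hpK := hK hy hz ha.le hb.le hab
  obtain ⟨δ, hδ, hmem⟩ := (sub_mem_lineDirections_iff hK hx hpK).1 hpx
  -- `q = x - δ (p - x)` lies beyond `x` as seen from `p`; the segment from `q` to `z` meets the
  -- line through `y` and `x` beyond `x`.
  refine (sub_mem_lineDirections_iff hK hx hy).2 ⟨δ * a / (1 + δ * b), by positivity, ?_⟩
  convert hK hmem hz (a := 1 / (1 + δ * b)) (b := δ * b / (1 + δ * b)) (by positivity)
    (by positivity) (by field_simp) using 1
  obtain rfl : a = 1 - b := by linarith
  match_scalars <;> field_simp <;> ring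

theorem isFaceOf_setOf_sub_mem_lineDirections (hK : Convex ℝ K) (hx : x ∈ K) :
    IsFaceOf K {y ∈ K | y - x ∈ lineDirections hK hx} := by
  refine ⟨?_, fun y hy ↦ hy.1, ?_⟩
  · have hdir : Convex ℝ {y | y - x ∈ lineDirections hK hx} := by
      simp only [sub_eq_neg_add]
      exact (lineDirections hK hx).convex.translate_preimage_right (-x)
    exact hK.inter hdir
  · rintro p ⟨-, hpx⟩ y hy z hz l ⟨hl₀, hl₁⟩ rfl
    have hp : (1 - l) • y + l • z ∈ openSegment ℝ y z :=
      ⟨1 - l, l, sub_pos.2 hl₁, hl₀, sub_add_cancel _ _, rfl⟩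
    exact ⟨⟨hy, sub_mem_lineDirections_of_mem_openSegment hK hx hy hz hp hpx⟩,
      hz, sub_mem_lineDirections_of_mem_openSegment hK hx hz hy (openSegment_symm ℝ y z ▸ hp) hpx⟩

theorem genFace_eq_setOf_sub_mem_lineDirections (hK : Convex ℝ K) (hx : x ∈ K) :
    genFace K x = {y ∈ K | y - x ∈ lineDirections hK hx} := by
  have hface := isFaceOf_setOf_sub_mem_lineDirections hK hx
  have hxmem : x ∈ {y ∈ K | y - x ∈ lineDirections hK hx} := ⟨hx, by simp⟩
  refine Set.Subset.antisymm (Set.sInter_subset_of_mem ⟨hface, hxmem⟩) ?_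
  rintro y ⟨hy, hyx⟩ F ⟨⟨-, -, hF⟩, hxF⟩
  obtain ⟨δ, hδ, hmem⟩ := (sub_mem_lineDirections_iff hK hx hy).1 hyx
  have hl : 1 / (1 + δ) ∈ Set.Ioo (0 : ℝ) 1 :=
    ⟨by positivity, (div_lt_one (by positivity)).2 (by linarith)⟩
  refine (hF x hxF y hy _ hmem (1 / (1 + δ)) hl ?_).1
  match_scalars <;> field_simp <;> ring

theorem vectorSpan_genFace (hK : Convex ℝ K) (hx : x ∈ K) :
    vectorSpan ℝ (genFace K x) = lineDirections hK hx := by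
  rw [genFace_eq_setOf_sub_mem_lineDirections hK hx]
  apply le_antisymm
  · rw [vectorSpan_def, Submodule.span_le]
    rintro _ ⟨y, ⟨-, hy⟩, z, ⟨-, hz⟩, rfl⟩
    simpa using sub_mem hy hz
  · intro v hv
    obtain ⟨ε, hε, hmem, -⟩ := exists_pos_add_smul_mem_sub_smul_mem hv
    have hεv : x + ε • v ∈ {y ∈ K | y - x ∈ lineDirections hK hx} :=
      ⟨hmem, by simpa using (lineDirections hK hx).smul_mem ε hv⟩
    have hxmem : x ∈ {y ∈ K | y - x ∈ lineDirections hK hx} := ⟨hx, by simp⟩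
    have hspan := vsub_mem_vectorSpan ℝ hεv hxmem
    rwa [vsub_eq_sub, add_sub_cancel_left, Submodule.smul_mem_iff _ hε.ne'] at hspan

end LineDirections

theorem lineDeriv_toReal_eq_of_eventually_eq {f : V → EReal} {x v : V} {c r : ℝ}
    (h : ∀ᶠ t in 𝓝 (0 : ℝ), f (x + t • v) = (r + t * c : ℝ)) :
    lineDeriv ℝ (fun y ↦ (f y).toReal) x v = c := by
  have haff : HasDerivAt (fun t : ℝ ↦ r + t * c) c 0 := by
    simpa using ((hasDerivAt_id (0 : ℝ)).mul_const c).const_add r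
  refine (haff.congr_of_eventuallyEq ?_).deriv
  filter_upwards [h] with t ht
  rw [ht, EReal.toReal_coe]

namespace IsGenAffine

variable {K : Set V} {f : V → EReal} {x y z v : V}

theorem convex_le (hf : IsGenAffine K f) (hK : Convex ℝ K) (α : ℝ) :
    Convex ℝ {y ∈ K | f y ≤ α} := by
  rintro y ⟨hy, hfy⟩ z ⟨hz, hfz⟩ a b ha hb hab
  obtain rfl : a = 1 - b := eq_sub_of_add_eq hab
  refine ⟨hK hy hz ha hb hab, ?_⟩
  calc f ((1 - b) • y + b • z)
      = ((1 - b : ℝ) : EReal) * f y + (b : EReal) * f z := hf.2 y hy z hz b ⟨hb, by linarith⟩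
    _ ≤ ((1 - b : ℝ) : EReal) * α + (b : EReal) * α := by gcongr
    _ = α := by norm_cast; ring_nf

theorem convex_eq (hf : IsGenAffine K f) (hK : Convex ℝ K) (α : ℝ) :
    Convex ℝ {y ∈ K | f y = α} := by
  rintro y ⟨hy, hfy⟩ z ⟨hz, hfz⟩ a b ha hb hab
  obtain rfl : a = 1 - b := eq_sub_of_add_eq hab
  refine ⟨hK hy hz ha hb hab, ?_⟩
  rw [hf.2 y hy z hz b ⟨hb, by linarith⟩, hfy, hfz]
  norm_cast
  ring

theorem map_combo_of_ne_top (hf : IsGenAffine K f) (hy : y ∈ K) (hz : z ∈ K) (hfy : f y ≠ ⊤)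
    (hfz : f z ≠ ⊤) {l : ℝ} (hl : l ∈ Set.Icc (0 : ℝ) 1) :
    f ((1 - l) • y + l • z) = ((1 - l) * (f y).toReal + l * (f z).toReal : ℝ) := by
  rw [hf.2 y hy z hz l hl]
  push_cast
  rw [EReal.coe_toReal hfy (hf.1 y hy), EReal.coe_toReal hfz (hf.1 z hz)]

theorem ne_top_of_mem_openSegment (hf : IsGenAffine K f) (hy : y ∈ K) (hz : z ∈ K)
    (hx : x ∈ openSegment ℝ y z) (hfx : f x ≠ ⊤) : f z ≠ ⊤ := by
  obtain ⟨a, b, ha, hb, hab, rfl⟩ := hx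
  obtain rfl : a = 1 - b := eq_sub_of_add_eq hab
  contrapose! hfx
  have hbot : ((1 - b : ℝ) : EReal) * f y ≠ ⊥ := by
    simp [-EReal.coe_sub, EReal.mul_eq_bot, hf.1 y hy, ha.le.not_gt]
  rw [hf.2 y hy z hz b ⟨hb.le, by linarith⟩, hfx, EReal.coe_mul_top_of_pos hb,
    EReal.add_top_of_ne_bot hbot]

theorem exists_eventually_eq_add_mul (hf : IsGenAffine K f) {hK : Convex ℝ K} {hx : x ∈ K}
    (hfx : f x ≠ ⊤) (hv : v ∈ lineDirections hK hx) :
    ∃ c : ℝ, ∀ᶠ t in 𝓝 (0 : ℝ), f (x + t • v) = ((f x).toReal + t * c : ℝ) := by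
  obtain ⟨ε, hε, hadd, hsub⟩ := exists_pos_add_smul_mem_sub_smul_mem hv
  have hmid : x ∈ openSegment ℝ (x - ε • v) (x + ε • v) :=
    ⟨1 / 2, 1 / 2, by norm_num, by norm_num, by norm_num, by module⟩
  have hfadd := hf.ne_top_of_mem_openSegment hsub hadd hmid hfx
  have hfsub := hf.ne_top_of_mem_openSegment hadd hsub (openSegment_symm ℝ (_ : V) _ ▸ hmid) hfx
  set p := (f (x - ε • v)).toReal
  set q := (f (x + ε • v)).toReal
  have hline : ∀ t ∈ Set.Icc (-ε) ε,
      f (x + t • v) = ((p + q) / 2 + t * ((q - p) / (2 * ε)) : ℝ) := by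
    rintro t ⟨ht₁, ht₂⟩
    have hl : (t + ε) / (2 * ε) ∈ Set.Icc (0 : ℝ) 1 :=
      ⟨div_nonneg (by linarith) (by linarith), (div_le_one (by linarith)).2 (by linarith)⟩
    have hcombo : x + t • v =
        (1 - (t + ε) / (2 * ε)) • (x - ε • v) + ((t + ε) / (2 * ε)) • (x + ε • v) := by
      match_scalars <;> field_simp <;> ring
    rw [hcombo, hf.map_combo_of_ne_top hsub hadd hfsub hfadd hl, EReal.coe_eq_coe_iff]
    field_simp
    ring
  have hfx' : (f x).toReal = (p + q) / 2 := by
    have h := hline 0 ⟨by linarith, hε.le⟩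
    rw [zero_smul, add_zero, zero_mul, add_zero] at h
    rw [h, EReal.toReal_coe]
  rw [hfx']
  exact ⟨_, mem_of_superset (Icc_mem_nhds (neg_neg_of_pos hε) hε) hline⟩

theorem eventually_eq_add_lineDeriv (hf : IsGenAffine K f) {hK : Convex ℝ K} {hx : x ∈ K}
    (hfx : f x ≠ ⊤) (hv : v ∈ lineDirections hK hx) :
    ∀ᶠ t in 𝓝 (0 : ℝ), f (x + t • v) =
      ((f x).toReal + t * lineDeriv ℝ (fun y ↦ (f y).toReal) x v : ℝ) := by
  obtain ⟨c, hc⟩ := hf.exists_eventually_eq_add_mul hfx hv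
  rwa [lineDeriv_toReal_eq_of_eventually_eq hc]

theorem lineDeriv_add (hf : IsGenAffine K f) {hK : Convex ℝ K} {hx : x ∈ K} (hfx : f x ≠ ⊤)
    {w : V} (hv : v ∈ lineDirections hK hx) (hw : w ∈ lineDirections hK hx) :
    lineDeriv ℝ (fun y ↦ (f y).toReal) x (v + w) =
      lineDeriv ℝ (fun y ↦ (f y).toReal) x v + lineDeriv ℝ (fun y ↦ (f y).toReal) x w := by
  refine lineDeriv_toReal_eq_of_eventually_eq (r := (f x).toReal) ?_
  filter_upwards [eventually_mul_const hv 2, eventually_mul_const hw 2,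
    eventually_mul_const (hf.eventually_eq_add_lineDeriv hfx hv) 2,
    eventually_mul_const (hf.eventually_eq_add_lineDeriv hfx hw) 2] with t hvK hwK hfv hfw
  have hmid : x + t • (v + w) =
      (1 - 1 / 2 : ℝ) • (x + (t * 2) • v) + (1 / 2 : ℝ) • (x + (t * 2) • w) := by module
  rw [hmid, hf.map_combo_of_ne_top hvK hwK (hfv ▸ EReal.coe_ne_top _) (hfw ▸ EReal.coe_ne_top _)
    (by norm_num), hfv, hfw, EReal.toReal_coe, EReal.toReal_coe, EReal.coe_eq_coe_iff]
  ring

/-- The line derivative at `x` of a generalized affine map finite at `x`, as a linear form on the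
directions along which one can move both ways from `x` inside `K`. Although `toReal`
takes the junk value `0` at `⊤`, `f` is finite near `x` along these directions. -/
noncomputable def lineDerivₗ (hf : IsGenAffine K f) (hK : Convex ℝ K) (hx : x ∈ K)
    (hfx : f x ≠ ⊤) : lineDirections hK hx →ₗ[ℝ] ℝ where
  toFun v := lineDeriv ℝ (fun y ↦ (f y).toReal) x v
  map_add' v w := hf.lineDeriv_add hfx v.2 w.2
  map_smul' _ _ := lineDeriv_smul

theorem eventually_eq_of_lineDerivₗ_eq_zero (hf : IsGenAffine K f) {hK : Convex ℝ K} {hx : x ∈ K}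
    (hfx : f x ≠ ⊤) {v : lineDirections hK hx} (hv : hf.lineDerivₗ hK hx hfx v = 0) :
    ∀ᶠ t in 𝓝 (0 : ℝ), f (x + t • (v : V)) = f x := by
  filter_upwards [hf.eventually_eq_add_lineDeriv hfx v.2] with t ht
  have hv' : lineDeriv ℝ (fun y ↦ (f y).toReal) x v = 0 := hv
  rw [ht, hv', mul_zero, add_zero, EReal.coe_toReal hfx (hf.1 x hx)]

end IsGenAffine

section ConstraintSet

variable {E ι : Type*} {K : Set E} {f : ι → E → EReal} {α : ι → ℝ} {s : Set ι} {x y : E}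

/-- The set `K_u^s` of points of `K` at which the constraints `f k ≤ α k` hold, with equality for
`k ∈ s`; the index type `ι` plays the role of `u`. -/
def constraintSet (K : Set E) (f : ι → E → EReal) (α : ι → ℝ) (s : Set ι) : Set E :=
  {y ∈ K | (∀ k ∉ s, f k y ≤ (α k : EReal)) ∧ (∀ k ∈ s, f k y = (α k : EReal))}

theorem constraintSet_subset : constraintSet K f α s ⊆ K :=
  fun _ hy ↦ hy.1

theorem ne_top_of_mem_constraintSet (hx : x ∈ constraintSet K f α s) (k : ι) : f k x ≠ ⊤ := by
  have hle : f k x ≤ α k := by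
    by_cases hk : k ∈ s
    · exact (hx.2.2 k hk).le
    · exact hx.2.1 k hk
  exact ne_top_of_le_ne_top (EReal.coe_ne_top _) hle

theorem mem_constraintSet_of_eq (hx : x ∈ constraintSet K f α s) (hy : y ∈ K)
    (hfy : ∀ k, f k y = f k x) : y ∈ constraintSet K f α s :=
  ⟨hy, fun k hk ↦ (hfy k).trans_le (hx.2.1 k hk), fun k hk ↦ (hfy k).trans (hx.2.2 k hk)⟩

end ConstraintSet

section FaceDimension

variable {ι : Type*} {K : Set V} {f : ι → V → EReal} {α : ι → ℝ} {s : Set ι} {x : V}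

theorem convex_constraintSet (hK : Convex ℝ K) (hf : ∀ k, IsGenAffine K (f k)) :
    Convex ℝ (constraintSet K f α s) := by
  rintro y ⟨hy, hyle, hyeq⟩ z ⟨hz, hzle, hzeq⟩ a b ha hb hab
  refine ⟨hK hy hz ha hb hab, fun k hk ↦ ?_, fun k hk ↦ ?_⟩
  · exact ((hf k).convex_le hK (α k) ⟨hy, hyle k hk⟩ ⟨hz, hzle k hk⟩ ha hb hab).2
  · exact ((hf k).convex_eq hK (α k) ⟨hy, hyeq k hk⟩ ⟨hz, hzeq k hk⟩ ha hb hab).2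

theorem mem_lineDirections_constraintSet [Finite ι] (hK : Convex ℝ K)
    (hf : ∀ k, IsGenAffine K (f k)) (hx : x ∈ constraintSet K f α s)
    {v : lineDirections hK (constraintSet_subset hx)}
    (hv : ∀ k,
      (hf k).lineDerivₗ hK (constraintSet_subset hx) (ne_top_of_mem_constraintSet hx k) v = 0) :
    (v : V) ∈ lineDirections (convex_constraintSet hK hf) hx := by
  have hconst : ∀ᶠ t in 𝓝 (0 : ℝ), ∀ k, f k (x + t • (v : V)) = f k x :=
    eventually_all.2 fun k ↦ (hf k).eventually_eq_of_lineDerivₗ_eq_zero _ (hv k)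
  filter_upwards [v.2, hconst] with t hK' hft
  exact mem_constraintSet_of_eq hx hK' hft

theorem stmt12_general [Fintype ι] (hK : Convex ℝ K) (hf : ∀ k, IsGenAffine K (f k))
    (hx : x ∈ constraintSet K f α s) :
    ∃ j : ℕ, j ≤ Fintype.card ι ∧ Module.rank ℝ (vectorSpan ℝ (genFace K x)) =
      Module.rank ℝ (vectorSpan ℝ (genFace (constraintSet K f α s) x)) + j := by
  have hxK : x ∈ K := constraintSet_subset hx
  have hL : Convex ℝ (constraintSet K f α s) := convex_constraintSet hK hf
  rw [vectorSpan_genFace hK hxK, vectorSpan_genFace hL hx]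
  let Φ : lineDirections hK hxK →ₗ[ℝ] ι → ℝ :=
    LinearMap.pi fun k ↦ (hf k).lineDerivₗ hK hxK (ne_top_of_mem_constraintSet hx k)
  have hker : LinearMap.ker Φ ≤ (lineDirections hL hx).submoduleOf (lineDirections hK hxK) :=
    fun v hv ↦ mem_lineDirections_constraintSet hK hf hx fun k ↦ congrFun hv k
  have hequiv := Submodule.submoduleOfEquivOfLe (lineDirections_mono hL hK hx constraintSet_subset)
  simpa [hequiv.rank_eq] using exists_rank_eq_rank_add_of_ker_le Φ hker

end FaceDimension

theorem stmt12 (K : Set V) (hK : Convex ℝ K) (ℓ : ℕ)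
    (f : Fin ℓ → V → EReal) (hf : ∀ k, IsGenAffine K (f k))
    (α : Fin ℓ → ℝ) (s : Set (Fin ℓ))
    (x : V)
    (hx : x ∈ {y ∈ K | (∀ k ∉ s, f k y ≤ (α k : EReal)) ∧
                       (∀ k ∈ s, f k y = (α k : EReal))})
    (m : ℕ)
    (hm : Module.rank ℝ ↥(vectorSpan ℝ (genFace
        {y ∈ K | (∀ k ∉ s, f k y ≤ (α k : EReal)) ∧
                 (∀ k ∈ s, f k y = (α k : EReal))} x)) = (m : Cardinal)) :
    ∃ j : ℕ, j ≤ ℓ ∧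
      Module.rank ℝ ↥(vectorSpan ℝ (genFace K x)) = ((m + j : ℕ) : Cardinal) := by
  obtain ⟨j, hj, hrank⟩ := stmt12_general hK hf hx
  exact ⟨j, by simpa using hj, by rw [hrank, constraintSet, hm, Nat.cast_add]⟩
end
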